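/- arXiv:1908.04328 — 3 statements merged into one kernel-verified Lean document; each statement's English description precedes it below -/
import Mathlib

section
/- Let m1, m2 : [0,1] → ℝ be twice continuously differentiable functions with m1''(x) > 0 and m2''(x) > 0 for all x ∈ [0,1]. Fix c ∈ (0,1) and assume m2'(0) ≤ m1'(0) and m1'(1−c) ≤ m2'(1). Then the following two statements are equivalent: (1) there exists a constant d ∈ ℝ such that m1(t) = m2(t+c) + d for all t ∈ [0, 1−c]; (2) (m2')⁻¹(m1'(0)) = c and the derivative of the inverse function (m1')⁻¹ equals the derivative of the inverse function (m2')⁻¹ at every point u ∈ (m1'(0), m1'(1−c)), i.e., ((m1')⁻¹)'(u) = ((m2')⁻¹)'(u) for all such u. -/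
open Set

/-!
For differentiable curves, `m₁ = m₂(· + c) + d` for some `d` iff `m₁' = m₂'(· + c)`. Passing to
inverses, the latter says that `(m₂')⁻¹ = (m₁')⁻¹ + c` on the range of `m₁'`, i.e. that this holds
at the left end point of the range and both inverses have the same derivative. By Darboux's theorem
the derivatives `m₁'` and `m₂'`, being strictly monotone, are continuous, and hence so are their
inverses.
-/

lemma eqOn_Ioo_iff_eqOn_Icc {X Y : Type*} [TopologicalSpace X] [LinearOrder X] [OrderTopology X]
    [DenselyOrdered X] [TopologicalSpace Y] [T2Space Y] {f g : X → Y} {a b : X} (hab : a ≠ b)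
    (hf : ContinuousOn f (Icc a b)) (hg : ContinuousOn g (Icc a b)) :
    EqOn f g (Ioo a b) ↔ EqOn f g (Icc a b) :=
  ⟨fun h => h.of_subset_closure hf hg Ioo_subset_Icc_self (closure_Ioo hab).ge,
    fun h => h.mono Ioo_subset_Icc_self⟩

section EqualDerivatives

variable {E : Type*} [NormedAddCommGroup E] [NormedSpace ℝ E] {f g f' g' : ℝ → E} {a b : ℝ}

lemma exists_eqOn_add_const_iff_eqOn_deriv (hab : a < b)
    (hf : ContinuousOn f (Icc a b)) (hg : ContinuousOn g (Icc a b))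
    (hf' : ∀ x ∈ Ioo a b, HasDerivAt f (f' x) x) (hg' : ∀ x ∈ Ioo a b, HasDerivAt g (g' x) x) :
    (∃ d, EqOn f (fun x => g x + d) (Icc a b)) ↔ EqOn f' g' (Ioo a b) := by
  constructor
  · rintro ⟨d, h⟩ x hx
    have hfg : f =ᶠ[nhds x] fun x => g x + d := h.eventuallyEq_of_mem (Icc_mem_nhds hx.1 hx.2)
    exact (hf' x hx).unique (((hg' x hx).add_const d).congr_of_eventuallyEq hfg)
  · intro h
    obtain ⟨d, hd⟩ : ∃ d, EqOn f (fun x => g x + d) (Ioo a b) :=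
      isOpen_Ioo.exists_eq_add_of_deriv_eq isPreconnected_Ioo
        (fun x hx => (hf' x hx).differentiableAt.differentiableWithinAt)
        (fun x hx => (hg' x hx).differentiableAt.differentiableWithinAt)
        (fun x hx => by rw [(hf' x hx).deriv, (hg' x hx).deriv, h hx])
    exact ⟨d, (eqOn_Ioo_iff_eqOn_Icc hab.ne hf (hg.add continuousOn_const)).1 hd⟩

lemma eqOn_add_const_iff_eqOn_deriv (hab : a < b) (d : E)
    (hf : ContinuousOn f (Icc a b)) (hg : ContinuousOn g (Icc a b))
    (hf' : ∀ x ∈ Ioo a b, HasDerivAt f (f' x) x) (hg' : ∀ x ∈ Ioo a b, HasDerivAt g (g' x) x) :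
    EqOn f (fun x => g x + d) (Icc a b) ↔ f a = g a + d ∧ EqOn f' g' (Ioo a b) := by
  have ha : a ∈ Icc a b := left_mem_Icc.2 hab.le
  rw [← exists_eqOn_add_const_iff_eqOn_deriv hab hf hg hf' hg']
  refine ⟨fun h => ⟨h ha, d, h⟩, ?_⟩
  rintro ⟨hd, d', h⟩
  obtain rfl : d' = d := add_left_cancel ((h ha).symm.trans hd)
  exact h

end EqualDerivatives

section MonotoneInverse

lemma strictMonoOn_image_of_leftInvOn {α β : Type*} [LinearOrder α] [Preorder β] {f : α → β}
    {g : β → α} {s : Set α} (hf : StrictMonoOn f s) (hg : LeftInvOn g f s) :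
    StrictMonoOn g (f '' s) := by
  rintro _ ⟨x, hx, rfl⟩ _ ⟨y, hy, rfl⟩ hxy
  rwa [hg hx, hg hy, ← hf.lt_iff_lt hx hy]

variable {α β : Type*} [LinearOrder α] [TopologicalSpace α] [OrderTopology α]
  [LinearOrder β] [TopologicalSpace β] [OrderTopology β] {f : α → β} {g : β → α} {s : Set α}

lemma continuousOn_of_strictMonoOn_of_ordConnected_image [s.OrdConnected] [(f '' s).OrdConnected]
    (hf : StrictMonoOn f s) : ContinuousOn f s :=
  continuousOn_iff_continuous_domRestrict.2
    (continuous_subtype_val.comp (hf.orderIso f s).continuous)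

lemma continuousOn_image_of_leftInvOn [hs : s.OrdConnected] [(f '' s).OrdConnected]
    (hf : StrictMonoOn f s) (hg : LeftInvOn g f s) : ContinuousOn g (f '' s) :=
  have : (g '' (f '' s)).OrdConnected := by rwa [hg.image_image]
  continuousOn_of_strictMonoOn_of_ordConnected_image (strictMonoOn_image_of_leftInvOn hf hg)

end MonotoneInverse

lemma continuousOn_of_hasDerivWithinAt_of_strictMonoOn {f f' : ℝ → ℝ} {s : Set ℝ}
    [hs : s.OrdConnected] (hf : ∀ x ∈ s, HasDerivWithinAt f (f' x) s x)
    (hf' : StrictMonoOn f' s) : ContinuousOn f' s :=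
  have : (f' '' s).OrdConnected := hs.image_hasDerivWithinAt hf
  continuousOn_of_strictMonoOn_of_ordConnected_image hf'

lemma strictMonoOn_of_hasDerivWithinAt_self_pos {f f' : ℝ → ℝ} {s : Set ℝ} (hs : Convex ℝ s)
    (hf : ∀ x ∈ s, HasDerivWithinAt f (f' x) s x) (hf' : ∀ x ∈ s, 0 < f' x) :
    StrictMonoOn f s :=
  strictMonoOn_of_hasDerivWithinAt_pos hs (fun x hx => (hf x hx).continuousWithinAt)
    (fun x hx => (hf x (interior_subset hx)).mono interior_subset)
    (fun x hx => hf' x (interior_subset hx))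

lemma eqOn_comp_iff_eqOn_leftInv_comp {α β γ : Type*} {f₁ : α → γ} {f₂ : β → γ} {g₁ : γ → α}
    {g₂ : γ → β} {φ : α → β} {s : Set α} {t : Set β} (hg₁ : LeftInvOn g₁ f₁ s)
    (hg₂ : LeftInvOn g₂ f₂ t) (hφ : MapsTo φ s t) (hst : f₁ '' s ⊆ f₂ '' t) :
    EqOn f₁ (f₂ ∘ φ) s ↔ EqOn g₂ (φ ∘ g₁) (f₁ '' s) := by
  constructor
  · rintro h _ ⟨x, hx, rfl⟩
    calc g₂ (f₁ x) = g₂ (f₂ (φ x)) := congrArg g₂ (h hx)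
      _ = φ x := hg₂ (hφ hx)
      _ = φ (g₁ (f₁ x)) := by rw [hg₁ hx]
  · intro h x hx
    obtain ⟨y, hy, hyx⟩ := hst (mem_image_of_mem f₁ hx)
    have hy_eq : y = φ x := by
      calc y = g₂ (f₁ x) := by rw [← hyx, hg₂ hy]
        _ = φ (g₁ (f₁ x)) := h (mem_image_of_mem f₁ hx)
        _ = φ x := by rw [hg₁ hx]
    rw [← hyx, hy_eq, Function.comp_apply]

theorem eqOn_shift_iff_eqOn_deriv_leftInv {f₁ f₂ g₁ g₂ g₁' g₂' : ℝ → ℝ} {a b c : ℝ} {s : Set ℝ}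
    [hs : s.OrdConnected] (hab : a < b) (hcs : MapsTo (· + c) (Icc a b) s)
    (hf₁ : StrictMonoOn f₁ (Icc a b)) (hf₁c : ContinuousOn f₁ (Icc a b))
    (hf₂ : StrictMonoOn f₂ s) (hf₂c : ContinuousOn f₂ s)
    (ha : f₁ a ∈ f₂ '' s) (hb : f₁ b ∈ f₂ '' s)
    (hg₁ : LeftInvOn g₁ f₁ (Icc a b)) (hg₂ : LeftInvOn g₂ f₂ s)
    (hg₁' : ∀ u ∈ Ioo (f₁ a) (f₁ b), HasDerivAt g₁ (g₁' u) u)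
    (hg₂' : ∀ u ∈ Ioo (f₁ a) (f₁ b), HasDerivAt g₂ (g₂' u) u) :
    EqOn f₁ (fun t => f₂ (t + c)) (Icc a b) ↔
      g₂ (f₁ a) = a + c ∧ EqOn g₁' g₂' (Ioo (f₁ a) (f₁ b)) := by
  have ha_mem : a ∈ Icc a b := left_mem_Icc.2 hab.le
  have hlt : f₁ a < f₁ b := hf₁ ha_mem (right_mem_Icc.2 hab.le) hab
  have himage : f₁ '' Icc a b = Icc (f₁ a) (f₁ b) :=
    hf₁c.image_Icc_of_monotoneOn hab.le hf₁.monotoneOn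
  have hf₂s : (f₂ '' s).OrdConnected := (hs.isPreconnected.image f₂ hf₂c).ordConnected
  have hsub : Icc (f₁ a) (f₁ b) ⊆ f₂ '' s := hf₂s.out ha hb
  have hf₁s : (f₁ '' Icc a b).OrdConnected := himage ▸ ordConnected_Icc
  have hg₁c : ContinuousOn g₁ (Icc (f₁ a) (f₁ b)) :=
    himage ▸ continuousOn_image_of_leftInvOn hf₁ hg₁
  have hg₂c : ContinuousOn g₂ (Icc (f₁ a) (f₁ b)) :=
    (continuousOn_image_of_leftInvOn hf₂ hg₂).mono hsub
  calc EqOn f₁ (fun t => f₂ (t + c)) (Icc a b)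
      ↔ EqOn g₂ (fun u => g₁ u + c) (Icc (f₁ a) (f₁ b)) :=
        himage ▸ eqOn_comp_iff_eqOn_leftInv_comp hg₁ hg₂ hcs (himage ▸ hsub)
    _ ↔ g₂ (f₁ a) = g₁ (f₁ a) + c ∧ EqOn g₂' g₁' (Ioo (f₁ a) (f₁ b)) :=
        eqOn_add_const_iff_eqOn_deriv hlt c hg₂c hg₁c hg₂' hg₁'
    _ ↔ g₂ (f₁ a) = a + c ∧ EqOn g₁' g₂' (Ioo (f₁ a) (f₁ b)) := by
        rw [hg₁ ha_mem, eqOn_comm]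

lemma exists_eqOn_shift_add_const_iff {E : Type*} [NormedAddCommGroup E] [NormedSpace ℝ E]
    {m₁ m₂ m₁' m₂' : ℝ → E} {a b c : ℝ} {s : Set ℝ}
    (hab : a < b) (hcs : MapsTo (· + c) (Icc a b) s)
    (hm₁ : ∀ x ∈ Icc a b, HasDerivWithinAt m₁ (m₁' x) (Icc a b) x)
    (hm₂ : ∀ x ∈ s, HasDerivWithinAt m₂ (m₂' x) s x)
    (hm₁' : ContinuousOn m₁' (Icc a b)) (hm₂' : ContinuousOn m₂' s) :
    (∃ d, EqOn m₁ (fun t => m₂ (t + c) + d) (Icc a b)) ↔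
      EqOn m₁' (fun t => m₂' (t + c)) (Icc a b) := by
  have hadd : ContinuousOn (· + c) (Icc a b) := (continuous_add_const c).continuousOn
  have hm₂c : ContinuousOn m₂ s := fun x hx => (hm₂ x hx).continuousWithinAt
  have hsub : Icc (a + c) (b + c) ⊆ s := by
    rw [← image_add_const_Icc]
    exact hcs.image_subset
  refine Iff.trans ?_ (eqOn_Ioo_iff_eqOn_Icc hab.ne hm₁' (hm₂'.comp hadd hcs))
  refine exists_eqOn_add_const_iff_eqOn_deriv hab (fun x hx => (hm₁ x hx).continuousWithinAt)
    (hm₂c.comp hadd hcs) (fun x hx => ?_) (fun x hx => ?_)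
  · exact (hm₁ x (Ioo_subset_Icc_self hx)).hasDerivAt (Icc_mem_nhds hx.1 hx.2)
  · have hs : s ∈ nhds (x + c) := Filter.mem_of_superset
      (Icc_mem_nhds (add_lt_add_left hx.1 c) (add_lt_add_left hx.2 c)) hsub
    exact ((hm₂ (x + c) (mem_of_mem_nhds hs)).hasDerivAt hs).comp_add_const x c

theorem shift_iff_deriv_of_inverse_eq_general {m₁ m₂ m₁' m₂' g₁ g₂ g₁' g₂' : ℝ → ℝ} {a b c : ℝ}
    (hm₁ : ∀ x ∈ Icc a b, HasDerivWithinAt m₁ (m₁' x) (Icc a b) x)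
    (hm₂ : ∀ x ∈ Icc a b, HasDerivWithinAt m₂ (m₂' x) (Icc a b) x)
    (hm₁' : StrictMonoOn m₁' (Icc a b)) (hm₂' : StrictMonoOn m₂' (Icc a b))
    (hc : c ∈ Ico 0 (b - a)) (hlow : m₂' a ≤ m₁' a) (hhigh : m₁' (b - c) ≤ m₂' b)
    (hg₁ : LeftInvOn g₁ m₁' (Icc a b)) (hg₂ : LeftInvOn g₂ m₂' (Icc a b))
    (hg₁' : ∀ u ∈ Ioo (m₁' a) (m₁' b), HasDerivWithinAt g₁ (g₁' u) (Icc (m₁' a) (m₁' b)) u)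
    (hg₂' : ∀ u ∈ Ioo (m₂' a) (m₂' b), HasDerivWithinAt g₂ (g₂' u) (Icc (m₂' a) (m₂' b)) u) :
    (∃ d, ∀ t ∈ Icc a (b - c), m₁ t = m₂ (t + c) + d) ↔
      g₂ (m₁' a) = a + c ∧ ∀ u ∈ Ioo (m₁' a) (m₁' (b - c)), g₁' u = g₂' u := by
  obtain ⟨hc0, hcb⟩ := hc
  have hac : a < b - c := by linarith
  have hsub : Icc a (b - c) ⊆ Icc a b := Icc_subset_Icc_right (by linarith)
  have hshift : MapsTo (· + c) (Icc a (b - c)) (Icc a b) := fun t ht =>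
    ⟨by linarith [ht.1], by linarith [ht.2]⟩
  have hm₁c : ContinuousOn m₁' (Icc a (b - c)) :=
    (continuousOn_of_hasDerivWithinAt_of_strictMonoOn hm₁ hm₁').mono hsub
  have hm₂c : ContinuousOn m₂' (Icc a b) :=
    continuousOn_of_hasDerivWithinAt_of_strictMonoOn hm₂ hm₂'
  have hle : m₁' a ≤ m₁' (b - c) :=
    hm₁'.monotoneOn (hsub (left_mem_Icc.2 hac.le)) (hsub (right_mem_Icc.2 hac.le)) hac.le
  have hle' : m₁' (b - c) ≤ m₁' b :=
    hm₁'.monotoneOn (hsub (right_mem_Icc.2 hac.le)) (right_mem_Icc.2 (by linarith)) (by linarith)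
  have hrange : Icc (m₂' a) (m₂' b) ⊆ m₂' '' Icc a b := intermediate_value_Icc (by linarith) hm₂c
  refine (exists_eqOn_shift_add_const_iff hac hshift (fun x hx => (hm₁ x (hsub hx)).mono hsub)
    hm₂ hm₁c hm₂c).trans <|
    eqOn_shift_iff_eqOn_deriv_leftInv hac hshift (hm₁'.mono hsub) hm₁c hm₂' hm₂c
      (hrange ⟨hlow, hle.trans hhigh⟩) (hrange ⟨hlow.trans hle, hhigh⟩) (hg₁.mono hsub) hg₂
      (fun u hu => ?_) (fun u hu => ?_)
  · have hu' : u ∈ Ioo (m₁' a) (m₁' b) := Ioo_subset_Ioo_right hle' hu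
    exact (hg₁' u hu').hasDerivAt (Icc_mem_nhds hu'.1 hu'.2)
  · have hu' : u ∈ Ioo (m₂' a) (m₂' b) := Ioo_subset_Ioo hlow hhigh hu
    exact (hg₂' u hu').hasDerivAt (Icc_mem_nhds hu'.1 hu'.2)

/-- Lemma 2.1 (full equivalence): for twice continuously differentiable convex
`m1, m2` on `[0,1]`, the curves differ by a horizontal shift `c` and a vertical
shift `d` iff the derivatives of the inverses of `m1'` and `m2'` coincide on
`(m1'(0), m1'(1-c))` and `(m2')⁻¹(m1'(0)) = c`. -/
theorem shift_iff_deriv_of_inverse_eq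
    (m1 m2 m1' m2' m1'' m2'' : ℝ → ℝ)
    (hm1d : ∀ x ∈ Icc (0:ℝ) 1, HasDerivWithinAt m1 (m1' x) (Icc 0 1) x)
    (hm1d2 : ∀ x ∈ Icc (0:ℝ) 1, HasDerivWithinAt m1' (m1'' x) (Icc 0 1) x)
    (hm1c : ContinuousOn m1'' (Icc 0 1))
    (hm2d : ∀ x ∈ Icc (0:ℝ) 1, HasDerivWithinAt m2 (m2' x) (Icc 0 1) x)
    (hm2d2 : ∀ x ∈ Icc (0:ℝ) 1, HasDerivWithinAt m2' (m2'' x) (Icc 0 1) x)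
    (hm2c : ContinuousOn m2'' (Icc 0 1))
    (hm1pos : ∀ x ∈ Icc (0:ℝ) 1, 0 < m1'' x)
    (hm2pos : ∀ x ∈ Icc (0:ℝ) 1, 0 < m2'' x)
    (c : ℝ) (hc : c ∈ Ioo (0:ℝ) 1)
    (hlow : m2' 0 ≤ m1' 0) (hhigh : m1' (1 - c) ≤ m2' 1)
    -- g1 and g2 are the inverses of m1' and m2' on their respective ranges
    (g1 g2 g1' g2' : ℝ → ℝ)
    (hg1l : ∀ x ∈ Icc (0:ℝ) 1, g1 (m1' x) = x)
    (hg1r : ∀ s ∈ Icc (m1' 0) (m1' 1), m1' (g1 s) = s)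
    (hg2l : ∀ x ∈ Icc (0:ℝ) 1, g2 (m2' x) = x)
    (hg2r : ∀ s ∈ Icc (m2' 0) (m2' 1), m2' (g2 s) = s)
    -- g1' and g2' are the derivatives of the inverse functions
    (hg1d : ∀ u ∈ Ioo (m1' 0) (m1' 1),
      HasDerivWithinAt g1 (g1' u) (Icc (m1' 0) (m1' 1)) u)
    (hg2d : ∀ u ∈ Ioo (m2' 0) (m2' 1),
      HasDerivWithinAt g2 (g2' u) (Icc (m2' 0) (m2' 1)) u) :
    (∃ d : ℝ, ∀ t ∈ Icc (0:ℝ) (1 - c), m1 t = m2 (t + c) + d) ↔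
      (g2 (m1' 0) = c ∧ ∀ u ∈ Ioo (m1' 0) (m1' (1 - c)), g1' u = g2' u) := by
  have hc' : c ∈ Ico (0 : ℝ) (1 - 0) := by simpa only [sub_zero] using Ioo_subset_Ico_self hc
  simpa only [zero_add] using shift_iff_deriv_of_inverse_eq_general hm1d hm2d
    (strictMonoOn_of_hasDerivWithinAt_self_pos (convex_Icc 0 1) hm1d2 hm1pos)
    (strictMonoOn_of_hasDerivWithinAt_self_pos (convex_Icc 0 1) hm2d2 hm2pos)
    hc' hlow hhigh hg1l hg2l hg1d hg2d
end

section
/- Let m : [0,1] → ℝ be twice continuously differentiable such that m'' is Lipschitz continuous on [0,1] and m''(x) ≥ κ for all x ∈ [0,1] and some κ > 0. Let K_d : ℝ → ℝ be a continuous nonnegative function vanishing outside [−1,1] with ∫_{−1}^{1} K_d(u) du = 1, and let η ∈ (0, (m'(1) − m'(0))/2). Then there exists a constant C > 0 such that for all h ∈ (0, η] and all t ∈ [m'(0) + η, m'(1) − η]: | (1/h) ∫₀¹ K_d( (m'(x) − t)/h ) dx − 1 / m''( (m')⁻¹(t) ) | ≤ C · h. -/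
open Set
open MeasureTheory
open scoped NNReal

/-!
Substituting `y = m' x` turns the estimator into the kernel average
`h⁻¹ ∫ K ((y - t) / h) w y dy` of the inverse density `w = 1 / (m'' ∘ (m')⁻¹)`, which is
Lipschitz on `[m' 0, m' 1]`. Since `t` stays at distance at least `h` from the endpoints, the
window `[t - h, t + h]` is not truncated, so the average equals `∫ K u * w (t + h * u) du` over
`[-1, 1]`. As `K` has mass `1`, it differs from `w t` by at most `h * ∫ |K u| * |u| du` times the
Lipschitz constant of `w`.
-/

section InverseFunction

variable {f f' g : ℝ → ℝ} {D : Set ℝ} {κ L : ℝ≥0}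

theorem lipschitzOnWith_of_leftInvOn_of_le_deriv (hD : Convex ℝ D) (hκ : 0 < κ)
    (hf : ∀ x ∈ D, HasDerivWithinAt f (f' x) D x) (hle : ∀ x ∈ D, κ ≤ f' x)
    (hg : LeftInvOn g f D) : LipschitzOnWith κ⁻¹ g (f '' D) := by
  have hderiv : ∀ x ∈ interior D, HasDerivAt f (f' x) x := fun x hx =>
    (hf x (interior_subset hx)).hasDerivAt (mem_interior_iff_mem_nhds.1 hx)
  have growth : ∀ x ∈ D, ∀ y ∈ D, x ≤ y → κ * (y - x) ≤ f y - f x :=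
    hD.mul_sub_le_image_sub_of_le_deriv (fun x hx => (hf x hx).continuousWithinAt)
      (fun x hx => (hderiv x hx).differentiableAt.differentiableWithinAt)
      (fun x hx => (hderiv x hx).deriv ▸ hle x (interior_subset hx))
  refine LipschitzOnWith.of_dist_le_mul ?_
  rintro _ ⟨x, hx, rfl⟩ _ ⟨y, hy, rfl⟩
  rw [hg hx, hg hy, NNReal.coe_inv, inv_mul_eq_div, le_div_iff₀' (by exact_mod_cast hκ)]
  wlog hxy : x ≤ y generalizing x y
  · simpa only [dist_comm] using this y hy x hx (le_of_not_ge hxy)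
  rw [dist_comm x, dist_comm (f x), Real.dist_eq, Real.dist_eq, abs_of_nonneg (sub_nonneg.2 hxy)]
  exact (growth x hx y hy hxy).trans (le_abs_self _)

theorem lipschitzOnWith_inv_of_le {α : Type*} [PseudoMetricSpace α] {φ : α → ℝ} {s : Set α}
    (hκ : 0 < κ) (hφ : LipschitzOnWith L φ s) (hle : ∀ x ∈ s, κ ≤ φ x) :
    LipschitzOnWith (L / κ ^ 2) (fun x => (φ x)⁻¹) s := by
  have hκ' : (0 : ℝ) < κ := by exact_mod_cast hκ
  refine LipschitzOnWith.of_dist_le_mul fun x hx y hy => ?_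
  have hx0 : 0 < φ x := hκ'.trans_le (hle x hx)
  have hy0 : 0 < φ y := hκ'.trans_le (hle y hy)
  calc dist (φ x)⁻¹ (φ y)⁻¹ = dist (φ x) (φ y) / (φ x * φ y) := by
        rw [dist_inv_inv₀ hx0.ne' hy0.ne', Real.norm_of_nonneg hx0.le, Real.norm_of_nonneg hy0.le]
    _ ≤ L * dist x y / (κ * κ) := by
        gcongr
        exacts [hφ.dist_le_mul x hx y hy, hle x hx, hle y hy]
    _ = ↑(L / κ ^ 2) * dist x y := by
        push_cast
        ring

theorem lipschitzOnWith_inv_deriv_comp_leftInvOn (hD : Convex ℝ D) (hκ : 0 < κ)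
    (hf : ∀ x ∈ D, HasDerivWithinAt f (f' x) D x) (hle : ∀ x ∈ D, κ ≤ f' x)
    (hL : LipschitzOnWith L f' D) (hg : LeftInvOn g f D) :
    LipschitzOnWith (L / κ ^ 3) (fun y => (f' (g y))⁻¹) (f '' D) := by
  have hmaps : MapsTo g (f '' D) D := by
    rintro _ ⟨x, hx, rfl⟩
    rwa [hg hx]
  have hcomp := (lipschitzOnWith_inv_of_le hκ hL hle).comp
    (lipschitzOnWith_of_leftInvOn_of_le_deriv hD hκ hf hle hg) hmaps
  rwa [show L / κ ^ 3 = L / κ ^ 2 * κ⁻¹ by field_simp]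

end InverseFunction

section ChangeOfVariables

variable {f f' : ℝ → ℝ} {a b : ℝ}

theorem image_Icc_of_hasDerivWithinAt_nonneg (hab : a ≤ b)
    (hf : ∀ x ∈ Icc a b, HasDerivWithinAt f (f' x) (Icc a b) x)
    (hnonneg : ∀ x ∈ Icc a b, 0 ≤ f' x) : f '' Icc a b = Icc (f a) (f b) := by
  have hcont : ContinuousOn f (Icc a b) := fun x hx => (hf x hx).continuousWithinAt
  exact hcont.image_Icc_of_monotoneOn hab <|
    monotoneOn_of_hasDerivWithinAt_nonneg (convex_Icc a b) hcont
      (fun x hx => (hf x (interior_subset hx)).mono interior_subset)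
      (fun x hx => hnonneg x (interior_subset hx))

theorem integral_comp_eq_integral_mul_inv_deriv {g : ℝ → ℝ} (hab : a ≤ b)
    (hf : ∀ x ∈ Icc a b, HasDerivWithinAt f (f' x) (Icc a b) x)
    (hpos : ∀ x ∈ Icc a b, 0 < f' x) (hg : LeftInvOn g f (Icc a b)) (F : ℝ → ℝ) :
    ∫ x in a..b, F (f x) = ∫ y in f a..f b, F y * (f' (g y))⁻¹ := by
  have himage : f '' Icc a b = Icc (f a) (f b) :=
    image_Icc_of_hasDerivWithinAt_nonneg hab hf fun x hx => (hpos x hx).le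
  have hfab : f a ≤ f b := nonempty_Icc.1 (himage ▸ (nonempty_Icc.2 hab).image f)
  rw [intervalIntegral.integral_of_le hab, intervalIntegral.integral_of_le hfab,
    ← integral_Icc_eq_integral_Ioc, ← integral_Icc_eq_integral_Ioc, ← himage,
    integral_image_eq_integral_abs_deriv_smul measurableSet_Icc hf hg.injOn]
  refine setIntegral_congr_fun measurableSet_Icc fun x hx => ?_
  have hx0 := hpos x hx
  simp only [hg hx, abs_of_pos hx0, smul_eq_mul]
  field_simp

end ChangeOfVariables

theorem intervalIntegral_eq_of_subset_of_eq_zero {E : Type*} [NormedAddCommGroup E]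
    [NormedSpace ℝ E] {F : ℝ → E} {a b c d : ℝ} (hca : c ≤ a) (hab : a ≤ b) (hbd : b ≤ d)
    (hF : ∀ x, x ∉ Icc a b → F x = 0) : ∫ x in c..d, F x = ∫ x in a..b, F x := by
  rw [intervalIntegral.integral_of_le (hca.trans (hab.trans hbd)),
    intervalIntegral.integral_of_le hab, ← integral_Icc_eq_integral_Ioc,
    ← integral_Icc_eq_integral_Ioc]
  exact setIntegral_eq_of_subset_of_forall_sdiff_eq_zero measurableSet_Icc
    (Icc_subset_Icc hca hbd) fun x hx => hF x hx.2

section Kernel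

variable {K w : ℝ → ℝ} {c d t h : ℝ} {Λ : ℝ≥0}

theorem inv_mul_integral_kernel_mul_eq (hh : 0 < h) (hKsupp : ∀ u, 1 < |u| → K u = 0)
    (ht : t ∈ Icc (c + h) (d - h)) :
    h⁻¹ * ∫ y in c..d, K ((y - t) / h) * w y = ∫ u in (-1 : ℝ)..1, K u * w (t + h * u) := by
  have hwindow : ∫ y in c..d, K ((y - t) / h) * w y =
      ∫ y in (t + h * -1)..(t + h * 1), K ((y - t) / h) * w y := by
    refine intervalIntegral_eq_of_subset_of_eq_zero (by linarith [ht.1]) (by linarith)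
      (by linarith [ht.2]) fun y hy => ?_
    rw [hKsupp, zero_mul]
    contrapose! hy
    rw [abs_div, abs_of_pos hh, div_le_one hh, abs_le] at hy
    constructor <;> linarith [hy.1, hy.2]
  rw [hwindow, ← intervalIntegral.smul_integral_comp_add_mul, smul_eq_mul,
    inv_mul_cancel_left₀ hh.ne']
  simp only [add_sub_cancel_left, mul_div_cancel_left₀ _ hh.ne']

theorem abs_integral_kernel_mul_sub_le (hh : 0 ≤ h) (hKint : ∫ u in (-1 : ℝ)..1, K u = 1)
    (hw : LipschitzOnWith Λ w (Icc (t - h) (t + h))) :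
    |(∫ u in (-1 : ℝ)..1, K u * w (t + h * u)) - w t| ≤
      Λ * (∫ u in (-1 : ℝ)..1, |K u| * |u|) * h := by
  have hle : (-1 : ℝ) ≤ 1 := by norm_num
  have hKi : IntervalIntegrable K volume (-1) 1 :=
    intervalIntegral.intervalIntegrable_of_integral_ne_zero (by simp [hKint])
  have hmaps : MapsTo (fun u => t + h * u) (Icc (-1) 1) (Icc (t - h) (t + h)) := fun u hu =>
    ⟨by nlinarith [hu.1], by nlinarith [hu.2]⟩
  have hmoment : IntervalIntegrable (fun u => |K u| * |u|) volume (-1) 1 :=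
    hKi.abs.mul_continuousOn continuous_abs.continuousOn
  have ht : t ∈ Icc (t - h) (t + h) := ⟨by linarith, by linarith⟩
  have hwcont : ContinuousOn (fun u => w (t + h * u)) (uIcc (-1) 1) := by
    rw [uIcc_of_le hle]
    exact hw.continuousOn.comp (by fun_prop) hmaps
  have hdiff : (∫ u in (-1 : ℝ)..1, K u * w (t + h * u)) - w t =
      ∫ u in (-1 : ℝ)..1, K u * (w (t + h * u) - w t) := by
    simp only [mul_sub]
    rw [intervalIntegral.integral_sub (hKi.mul_continuousOn hwcont) (hKi.mul_const _),
      intervalIntegral.integral_mul_const, hKint, one_mul]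
  have hbound : ∀ u ∈ Icc (-1 : ℝ) 1,
      ‖K u * (w (t + h * u) - w t)‖ ≤ Λ * h * (|K u| * |u|) := fun u hu =>
    calc ‖K u * (w (t + h * u) - w t)‖ ≤ |K u| * (Λ * |t + h * u - t|) := by
          rw [norm_mul, Real.norm_eq_abs]
          gcongr
          exact hw.dist_le_mul _ (hmaps hu) _ ht
      _ = Λ * h * (|K u| * |u|) := by
          rw [add_sub_cancel_left, abs_mul, abs_of_nonneg hh]
          ring
  calc |(∫ u in (-1 : ℝ)..1, K u * w (t + h * u)) - w t|
      ≤ ∫ u in (-1 : ℝ)..1, Λ * h * (|K u| * |u|) := by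
        rw [hdiff]
        exact intervalIntegral.norm_integral_le_of_norm_le hle
          (.of_forall fun u hu => hbound u (Ioc_subset_Icc_self hu))
          (hmoment.const_mul _)
    _ = Λ * (∫ u in (-1 : ℝ)..1, |K u| * |u|) * h := by
        rw [intervalIntegral.integral_const_mul]
        ring

theorem abs_kernel_estimator_sub_inv_deriv_le {f f' g : ℝ → ℝ} {a b : ℝ} {κ L : ℝ≥0}
    (hab : a ≤ b) (hκ : 0 < κ) (hf : ∀ x ∈ Icc a b, HasDerivWithinAt f (f' x) (Icc a b) x)
    (hL : LipschitzOnWith L f' (Icc a b)) (hle : ∀ x ∈ Icc a b, κ ≤ f' x)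
    (hKsupp : ∀ u, 1 < |u| → K u = 0) (hKint : ∫ u in (-1 : ℝ)..1, K u = 1)
    (hg : LeftInvOn g f (Icc a b)) (hh : 0 < h) (ht : t ∈ Icc (f a + h) (f b - h)) :
    |h⁻¹ * (∫ x in a..b, K ((f x - t) / h)) - (f' (g t))⁻¹| ≤
      (L / κ ^ 3 : ℝ≥0) * (∫ u in (-1 : ℝ)..1, |K u| * |u|) * h := by
  have hpos : ∀ x ∈ Icc a b, 0 < f' x := fun x hx => (NNReal.coe_pos.2 hκ).trans_le (hle x hx)
  have hwindow : Icc (t - h) (t + h) ⊆ f '' Icc a b := by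
    rw [image_Icc_of_hasDerivWithinAt_nonneg hab hf fun x hx => (hpos x hx).le]
    exact Icc_subset_Icc (by linarith [ht.1]) (by linarith [ht.2])
  rw [integral_comp_eq_integral_mul_inv_deriv hab hf hpos hg fun y => K ((y - t) / h),
    inv_mul_integral_kernel_mul_eq hh hKsupp ht]
  exact abs_integral_kernel_mul_sub_le (w := fun y => (f' (g y))⁻¹) hh.le hKint <|
    (lipschitzOnWith_inv_deriv_comp_leftInvOn (convex_Icc a b) hκ hf hle hL hg).mono hwindow

end Kernel

theorem kernel_density_uniform_bias_bound_general {f f' g K : ℝ → ℝ} {a b κ : ℝ} (hab : a ≤ b)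
    (hκ : 0 < κ) (hf : ∀ x ∈ Icc a b, HasDerivWithinAt f (f' x) (Icc a b) x)
    (hf'lip : ∃ L : ℝ≥0, LipschitzOnWith L f' (Icc a b)) (hf'ge : ∀ x ∈ Icc a b, κ ≤ f' x)
    (hKsupp : ∀ u, 1 < |u| → K u = 0) (hKint : ∫ u in (-1 : ℝ)..1, K u = 1)
    (hg : LeftInvOn g f (Icc a b)) (η : ℝ) :
    ∃ C > (0 : ℝ), ∀ h ∈ Ioc 0 η, ∀ t ∈ Icc (f a + η) (f b - η),
      |(1 / h) * (∫ x in a..b, K ((f x - t) / h)) - 1 / f' (g t)| ≤ C * h := by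
  obtain ⟨L, hL⟩ := hf'lip
  lift κ to ℝ≥0 using hκ.le
  set C₀ : ℝ := (L / κ ^ 3 : ℝ≥0) * ∫ u in (-1 : ℝ)..1, |K u| * |u|
  refine ⟨max C₀ 1, by positivity, fun h hh t ht => ?_⟩
  have ht' : t ∈ Icc (f a + h) (f b - h) :=
    ⟨by linarith [ht.1, hh.2], by linarith [ht.2, hh.2]⟩
  rw [one_div, one_div]
  calc |h⁻¹ * (∫ x in a..b, K ((f x - t) / h)) - (f' (g t))⁻¹| ≤ C₀ * h :=
        abs_kernel_estimator_sub_inv_deriv_le hab (NNReal.coe_pos.1 hκ) hf hL hf'ge hKsupp hKint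
          hg hh.1 ht'
    _ ≤ max C₀ 1 * h := mul_le_mul_of_nonneg_right (le_max_left _ _) hh.1.le

/-- Uniform `O(h)` bias bound for the inverse-regression kernel estimator on a
compact interior interval `[m'(0) + η, m'(1) - η]`. -/
theorem kernel_density_uniform_bias_bound
    (m m' m'' g Kd : ℝ → ℝ) (κ : ℝ) (hκ : 0 < κ)
    (hm : ∀ x ∈ Icc (0:ℝ) 1, HasDerivWithinAt m (m' x) (Icc 0 1) x)
    (hm' : ∀ x ∈ Icc (0:ℝ) 1, HasDerivWithinAt m' (m'' x) (Icc 0 1) x)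
    (hm''c : ContinuousOn m'' (Icc 0 1))
    (hm''lip : ∃ Lm : NNReal, LipschitzOnWith Lm m'' (Icc 0 1))
    (hm''ge : ∀ x ∈ Icc (0:ℝ) 1, κ ≤ m'' x)
    (hKc : Continuous Kd) (hKnn : ∀ x : ℝ, 0 ≤ Kd x)
    (hKsupp : ∀ x : ℝ, 1 < |x| → Kd x = 0)
    (hKint : ∫ u in (-1:ℝ)..1, Kd u = 1)
    -- g is the inverse of m' on [m'(0), m'(1)]
    (hgl : ∀ x ∈ Icc (0:ℝ) 1, g (m' x) = x)
    (hgr : ∀ s ∈ Icc (m' 0) (m' 1), m' (g s) = s)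
    (η : ℝ) (hη : η ∈ Ioo (0:ℝ) ((m' 1 - m' 0) / 2)) :
    ∃ C > (0:ℝ), ∀ h ∈ Ioc (0:ℝ) η, ∀ t ∈ Icc (m' 0 + η) (m' 1 - η),
      |(1 / h) * (∫ x in (0:ℝ)..1, Kd ((m' x - t) / h)) - 1 / m'' (g t)|
        ≤ C * h :=
  kernel_density_uniform_bias_bound_general zero_le_one hκ hm' hm''lip hm''ge hKsupp
    hKint hgl η
end

section
/- Let m : [0,1] → ℝ be twice continuously differentiable such that m'' is Lipschitz continuous on [0,1]. Let K : ℝ → ℝ be Lipschitz continuous with K(−x) = K(x) for all x and K(x) = 0 for |x| > 1, and assume κ₂ := ∫_{−1}^{1} K(x) x² dx > 0; set K°(x) := K(x)·x / κ₂. Then there exists a constant C > 0 such that for every integer n ≥ 1 and every b ∈ (0, 1/2] with n·b ≥ 1, and every t ∈ [b, 1−b]: | (1/(n b²)) Σ_{i=1}^{n} K°( (i/n − t)/b ) · m(i/n) − m'(t) | ≤ C · ( 1/(n b²) + b² ). -/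
open Set

/-!
For `F y = G ((y - t) / b) * m y`, where `G` is the derivative kernel `K°`, the estimator is
`b⁻²` times the Riemann sum `n⁻¹ ∑ F (i / n)`. A Riemann sum of mesh `1 / n` differs from the
integral by at most the total variation of `F` divided by `n`, and this variation is bounded
uniformly in `t` and `b` because total variation does not change under affine substitutions; this
gives the term `1 / (n b²)`. The integral `b⁻² ∫ F` equals `b⁻¹ ∫ G x * m (t + b x)`, and the
moments `0, 1, 0` of `G` remove all of the second order Taylor polynomial of `m` at `t` except
`m' t`; the remainder is `O(b³)`, which gives the term `b²`.
-/

open MeasureTheory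
open scoped NNReal ENNReal

section Taylor

variable {E : Type*} [NormedAddCommGroup E] [NormedSpace ℝ E] {s : Set ℝ} {t x : ℝ}

lemma norm_sub_le_mul_abs_pow_succ {f f' : ℝ → E} {C : ℝ≥0} {k : ℕ} (hs : Convex ℝ s)
    (hf : ∀ y ∈ s, HasDerivWithinAt f (f' y) s y) (bound : ∀ y ∈ s, ‖f' y‖ ≤ C * |y - t| ^ k)
    (ht : t ∈ s) (hx : x ∈ s) : ‖f x - f t‖ ≤ C * |x - t| ^ (k + 1) := by
  have hsub : uIcc t x ⊆ s := hs.ordConnected.uIcc_subset ht hx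
  have hderiv : ∀ y ∈ uIcc t x, ‖f' y‖ ≤ C * |x - t| ^ k := fun y hy ↦ by
    have hyx : |y - t| ≤ |x - t| := abs_sub_left_of_mem_uIcc hy
    exact (bound y (hsub hy)).trans (by gcongr)
  calc ‖f x - f t‖ ≤ C * |x - t| ^ k * ‖x - t‖ :=
        (convex_uIcc t x).norm_image_sub_le_of_norm_hasDerivWithin_le
          (fun y hy ↦ (hf y (hsub hy)).mono hsub) hderiv left_mem_uIcc right_mem_uIcc
    _ = C * |x - t| ^ (k + 1) := by rw [Real.norm_eq_abs, pow_succ, mul_assoc]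

lemma norm_sub_taylor_two_le_of_lipschitzOnWith {f f' f'' : ℝ → E} {L : ℝ≥0} (hs : Convex ℝ s)
    (hf : ∀ y ∈ s, HasDerivWithinAt f (f' y) s y)
    (hf' : ∀ y ∈ s, HasDerivWithinAt f' (f'' y) s y) (hL : LipschitzOnWith L f'' s)
    (ht : t ∈ s) (hx : x ∈ s) :
    ‖f x - (f t + (x - t) • f' t + ((x - t) ^ 2 / 2) • f'' t)‖ ≤ L * |x - t| ^ 3 := by
  have bound₀ : ∀ y ∈ s, ‖f'' y - f'' t‖ ≤ L * |y - t| ^ 1 := fun y hy ↦ by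
    simpa [Real.dist_eq, dist_eq_norm] using hL.dist_le_mul y hy t ht
  have bound₁ : ∀ y ∈ s, ‖f' y - f' t - (y - t) • f'' t‖ ≤ L * |y - t| ^ 2 := fun y hy ↦ by
    have hderiv : ∀ z ∈ s, HasDerivWithinAt (fun z ↦ f' z - (z - t) • f'' t) (f'' z - f'' t) s z :=
      fun z hz ↦ by
        simpa using (hf' z hz).fun_sub (((hasDerivWithinAt_id z s).sub_const t).smul_const (f'' t))
    convert norm_sub_le_mul_abs_pow_succ hs hderiv bound₀ ht hy using 2
    simp only [sub_self, zero_smul, sub_zero]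
    abel
  have hderiv : ∀ z ∈ s, HasDerivWithinAt
      (fun z ↦ f z - (z - t) • f' t - ((z - t) ^ 2 / 2) • f'' t)
      (f' z - f' t - (z - t) • f'' t) s z := fun z hz ↦ by
    have hid := (hasDerivWithinAt_id z s).sub_const t
    simpa using ((hf z hz).fun_sub (hid.smul_const (f' t))).fun_sub
      (((hid.pow 2).div_const 2).smul_const (f'' t))
  convert norm_sub_le_mul_abs_pow_succ hs hderiv bound₁ ht hx using 2
  simp only [sub_self, zero_smul, sub_zero, zero_pow two_ne_zero, zero_div]
  abel

end Taylor

lemma integral_eq_zero_of_odd {E : Type*} [NormedAddCommGroup E] [NormedSpace ℝ E] {f : ℝ → E}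
    (hf : f.Odd) (a : ℝ) : ∫ x in -a..a, f x = 0 := by
  have h := intervalIntegral.integral_comp_neg (a := -a) (b := a) f
  simp only [hf _, intervalIntegral.integral_neg, neg_neg] at h
  linear_combination (norm := module) (-1 / 2 : ℝ) • h

lemma integral_eq_integral_of_eq_zero {E : Type*} [NormedAddCommGroup E] [NormedSpace ℝ E]
    {f : ℝ → E} {a b c d : ℝ} (hac : a ≤ c) (hcd : c ≤ d) (hdb : d ≤ b)
    (hf : ∀ x ∈ Icc a b \ Icc c d, f x = 0) : ∫ x in a..b, f x = ∫ x in c..d, f x := by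
  rw [intervalIntegral.integral_of_le (hac.trans (hcd.trans hdb)),
    intervalIntegral.integral_of_le hcd, ← integral_Icc_eq_integral_Ioc,
    ← integral_Icc_eq_integral_Ioc]
  exact setIntegral_eq_of_subset_of_forall_sdiff_eq_zero measurableSet_Icc
    (Icc_subset_Icc hac hdb) hf

lemma enorm_le_enorm_add_eVariationOn {α E : Type*} [LinearOrder α] [NormedAddCommGroup E]
    {f : α → E} {s : Set α} {x y : α} (hx : x ∈ s) (hy : y ∈ s) :
    ‖f y‖ₑ ≤ ‖f x‖ₑ + eVariationOn f s := by
  calc ‖f y‖ₑ = ‖f x + (f y - f x)‖ₑ := by rw [add_sub_cancel]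
    _ ≤ ‖f x‖ₑ + ‖f y - f x‖ₑ := enorm_add_le _ _
    _ ≤ ‖f x‖ₑ + eVariationOn f s := by
      rw [← edist_eq_enorm_sub]
      gcongr
      exact eVariationOn.edist_le f hy hx

lemma boundedVariationOn_univ_of_eq_const {E : Type*} [PseudoEMetricSpace E] {f : ℝ → E} {c : E}
    {r : ℝ} (hf : LocallyBoundedVariationOn f univ) (hc : ∀ x, r < |x| → f x = c) :
    BoundedVariationOn f univ := by
  set R := |r| + 1
  have hrR : r < R := by linarith [le_abs_self r]
  have hR : -R ≤ R := by linarith [abs_nonneg r]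
  have hclamp : f = f ∘ fun x ↦ (projIcc (-R) R hR x : ℝ) := by
    funext x
    by_cases hx : x ∈ Icc (-R) R
    · simp [projIcc_of_mem hR hx]
    · have hRx : R < |x| := lt_of_not_ge (mt abs_le.1 hx)
      have hRproj : |(projIcc (-R) R hR x : ℝ)| = R := by
        rcases lt_abs.1 hRx with h | h
        · rw [projIcc_of_right_le hR h.le, abs_of_nonneg (by linarith)]
        · rw [projIcc_of_le_left hR (by linarith), abs_neg, abs_of_nonneg (by linarith)]
      rw [Function.comp_apply, hc x (hrR.trans hRx), hc _ (by rwa [hRproj])]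
  rw [hclamp]
  refine ne_top_of_le_ne_top (hf (-R) R (mem_univ _) (mem_univ _)) ?_
  exact eVariationOn.comp_le_of_monotoneOn f _
    (((Subtype.mono_coe _).comp (monotone_projIcc hR)).monotoneOn _)
    fun x _ ↦ ⟨mem_univ _, (projIcc (-R) R hR x).2⟩

lemma boundedVariationOn_Icc_of_hasDerivWithinAt {E : Type*} [NormedAddCommGroup E]
    [NormedSpace ℝ E] {f f' : ℝ → E} {a b : ℝ}
    (hf : ∀ x ∈ Icc a b, HasDerivWithinAt f (f' x) (Icc a b) x) (hf' : ContinuousOn f' (Icc a b)) :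
    BoundedVariationOn f (Icc a b) := by
  obtain ⟨C, hC⟩ := isCompact_Icc.exists_bound_of_continuousOn hf'
  have hlip : LipschitzOnWith C.toNNReal f (Icc a b) :=
    (convex_Icc a b).lipschitzOnWith_of_nnnorm_hasDerivWithin_le hf fun x hx ↦
      NNReal.coe_le_coe.1 ((hC x hx).trans (Real.le_coe_toNNReal C))
  exact hlip.comp_boundedVariationOn (mapsTo_id _) (BoundedVariationOn.id_Icc a b)

lemma intervalIntegrable_of_boundedVariationOn {f : ℝ → ℝ} {a b : ℝ} {μ : Measure ℝ}
    [IsLocallyFiniteMeasure μ] (hf : BoundedVariationOn f (uIcc a b)) :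
    IntervalIntegrable f μ a b := by
  obtain ⟨p, q, hp, hq, rfl⟩ := hf.locallyBoundedVariationOn.exists_monotoneOn_sub_monotoneOn
  exact hp.intervalIntegrable.sub hq.intervalIntegrable

lemma abs_mul_sub_integral_le_eVariationOn {f : ℝ → ℝ} {a b ξ : ℝ}
    (hf : BoundedVariationOn f (Icc a b)) (hξ : ξ ∈ Icc a b) :
    |(b - a) * f ξ - ∫ x in a..b, f x| ≤ (b - a) * (eVariationOn f (Icc a b)).toReal := by
  have hab : a ≤ b := hξ.1.trans hξ.2
  have hint : IntervalIntegrable f volume a b :=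
    intervalIntegrable_of_boundedVariationOn (by rwa [uIcc_of_le hab])
  have hdiff : (b - a) * f ξ - ∫ x in a..b, f x = ∫ x in a..b, (f ξ - f x) := by
    rw [intervalIntegral.integral_sub (by simp) hint, intervalIntegral.integral_const, smul_eq_mul]
  rw [hdiff, mul_comm (b - a), ← abs_of_nonneg (sub_nonneg.2 hab), ← Real.norm_eq_abs]
  refine intervalIntegral.norm_integral_le_of_norm_le_const fun x hx ↦ ?_
  rw [uIoc_of_le hab] at hx
  exact hf.dist_le hξ (Ioc_subset_Icc_self hx)

lemma abs_riemannSum_sub_integral_le_eVariationOn {f : ℝ → ℝ} {u ξ : ℕ → ℝ} {n : ℕ} {δ : ℝ}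
    (hu : Monotone u) (hδ : ∀ i < n, u (i + 1) - u i ≤ δ)
    (hξ : ∀ i < n, ξ i ∈ Icc (u i) (u (i + 1))) (hf : BoundedVariationOn f (Icc (u 0) (u n))) :
    |∑ i ∈ Finset.range n, (u (i + 1) - u i) * f (ξ i) - ∫ x in u 0..u n, f x|
      ≤ δ * (eVariationOn f (Icc (u 0) (u n))).toReal := by
  have hcell : ∀ i < n, BoundedVariationOn f (Icc (u i) (u (i + 1))) := fun i hi ↦
    hf.mono (Icc_subset_Icc (hu i.zero_le) (hu hi))
  have hint : ∀ i < n, IntervalIntegrable f volume (u i) (u (i + 1)) := fun i hi ↦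
    intervalIntegrable_of_boundedVariationOn (by rw [uIcc_of_le (hu i.le_succ)]; exact hcell i hi)
  rw [← intervalIntegral.sum_integral_adjacent_intervals hint, ← Finset.sum_sub_distrib]
  calc _ ≤ ∑ i ∈ Finset.range n,
          |(u (i + 1) - u i) * f (ξ i) - ∫ x in u i..u (i + 1), f x| :=
        Finset.abs_sum_le_sum_abs _ _
    _ ≤ ∑ i ∈ Finset.range n, δ * (eVariationOn f (Icc (u i) (u (i + 1)))).toReal := by
      refine Finset.sum_le_sum fun i hi ↦ ?_
      rw [Finset.mem_range] at hi
      refine (abs_mul_sub_integral_le_eVariationOn (hcell i hi) (hξ i hi)).trans ?_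
      gcongr
      exact hδ i hi
    _ = δ * (eVariationOn f (Icc (u 0) (u n))).toReal := by
      rw [← Finset.mul_sum, ← eVariationOn.sum' f hu,
        ENNReal.toReal_sum fun i hi ↦ hcell i (Finset.mem_range.1 hi)]

lemma abs_average_sub_integral_le_eVariationOn {f : ℝ → ℝ} {n : ℕ} (hn : n ≠ 0)
    (hf : BoundedVariationOn f (Icc 0 1)) :
    |(1 / n : ℝ) * ∑ i ∈ Finset.Icc 1 n, f (i / n) - ∫ x in (0 : ℝ)..1, f x|
      ≤ 1 / n * (eVariationOn f (Icc 0 1)).toReal := by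
  set u : ℕ → ℝ := fun i ↦ i / n
  have hu : Monotone u := fun i j hij ↦ by simp only [u]; gcongr
  have hstep (i : ℕ) : u (i + 1) - u i = 1 / n := by simp only [u]; push_cast; ring
  have hu₀ : u 0 = 0 := by simp [u]
  have hun : u n = 1 := by simp [u, hn]
  have hsum : (1 / n : ℝ) * ∑ i ∈ Finset.Icc 1 n, f (i / n)
      = ∑ i ∈ Finset.range n, (u (i + 1) - u i) * f (u (i + 1)) := by
    simp only [hstep]
    rw [← Finset.mul_sum, Finset.range_eq_Ico, Finset.sum_Ico_add' (fun i ↦ f (u i)) 0 n 1]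
    rfl
  have := abs_riemannSum_sub_integral_le_eVariationOn (f := f) (ξ := fun i ↦ u (i + 1)) (n := n) hu
    (fun i _ ↦ (hstep i).le) (fun i _ ↦ right_mem_Icc.2 (hu i.le_succ)) (by rwa [hu₀, hun])
  rwa [hu₀, hun, ← hsum] at this

lemma eVariationOn_comp_sub_div_mul_le {g f : ℝ → ℝ} {s : Set ℝ} {A M : ℝ≥0∞} {b : ℝ}
    (hb : 0 < b) (hg : ∀ x, ‖g x‖ₑ ≤ A) (hf : ∀ x ∈ s, ‖f x‖ₑ ≤ M) (t : ℝ) :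
    eVariationOn (fun y ↦ g ((y - t) / b) * f y) s
      ≤ A * eVariationOn f s + M * eVariationOn g univ := by
  have hmono : Monotone fun y : ℝ ↦ (y - t) / b := fun x y hxy ↦ by dsimp only; gcongr
  grw [eVariationOn_fun_mul_le (fun x _ ↦ hg _) hf,
    ← eVariationOn.comp_le_of_monotoneOn g _ (hmono.monotoneOn s) (mapsTo_univ _ s)]
  rfl

lemma exists_abs_kernelSum_sub_integral_le {g f : ℝ → ℝ} (hg : BoundedVariationOn g univ)
    (hf : BoundedVariationOn f (Icc 0 1)) :
    ∃ C ≥ 0, ∀ n : ℕ, n ≠ 0 → ∀ b > 0, ∀ t,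
      |(1 / n : ℝ) * ∑ i ∈ Finset.Icc 1 n, g ((i / n - t) / b) * f (i / n)
        - ∫ y in (0 : ℝ)..1, g ((y - t) / b) * f y| ≤ 1 / n * C := by
  have hzero : (0 : ℝ) ∈ Icc (0 : ℝ) 1 := left_mem_Icc.2 zero_le_one
  set V : ℝ≥0∞ := (‖g 0‖ₑ + eVariationOn g univ) * eVariationOn f (Icc 0 1)
    + (‖f 0‖ₑ + eVariationOn f (Icc 0 1)) * eVariationOn g univ
  have hV : V ≠ ∞ := by
    unfold BoundedVariationOn at hf hg
    finiteness
  refine ⟨V.toReal, ENNReal.toReal_nonneg, fun n hn b hb t ↦ ?_⟩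
  have hvar : eVariationOn (fun y ↦ g ((y - t) / b) * f y) (Icc 0 1) ≤ V :=
    eVariationOn_comp_sub_div_mul_le hb
      (fun x ↦ enorm_le_enorm_add_eVariationOn (mem_univ 0) (mem_univ x))
      (fun x hx ↦ enorm_le_enorm_add_eVariationOn hzero hx) t
  refine (abs_average_sub_integral_le_eVariationOn hn (ne_top_of_le_ne_top hV hvar)).trans ?_
  gcongr

/-- A kernel for estimating a first derivative, vanishing outside `[-1, 1]` and of locally bounded
variation: its moments of order `0`, `1`, `2` over `[-1, 1]` are `0`, `1`, `0`, as those of the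
equivalent derivative kernel `K°` are. -/
structure IsDerivativeKernel (G : ℝ → ℝ) : Prop where
  locallyBoundedVariationOn : LocallyBoundedVariationOn G univ
  eq_zero_of_one_lt_abs : ∀ x, 1 < |x| → G x = 0
  integral_eq_zero : ∫ x in (-1 : ℝ)..1, G x = 0
  integral_mul_self : ∫ x in (-1 : ℝ)..1, G x * x = 1
  integral_mul_sq : ∫ x in (-1 : ℝ)..1, G x * x ^ 2 = 0

lemma isDerivativeKernel_of_even {K : ℝ → ℝ} {κ₂ : ℝ} (hK : LocallyBoundedVariationOn K univ)
    (heven : K.Even) (hsupp : ∀ x, 1 < |x| → K x = 0)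
    (hκ₂ : κ₂ = ∫ x in (-1 : ℝ)..1, K x * x ^ 2) (hκ₂_ne : κ₂ ≠ 0) :
    IsDerivativeKernel fun x ↦ K x * x / κ₂ where
  locallyBoundedVariationOn := by
    have hlin : LocallyBoundedVariationOn (fun x : ℝ ↦ x / κ₂) univ := by
      simpa only [smul_eq_mul, inv_mul_eq_div] using
        (lipschitzWith_smul κ₂⁻¹).locallyBoundedVariationOn (univ : Set ℝ)
    simpa only [mul_div_assoc] using hK.fun_mul hlin
  eq_zero_of_one_lt_abs x hx := by rw [hsupp x hx, zero_mul, zero_div]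
  integral_eq_zero := integral_eq_zero_of_odd (fun x ↦ by rw [heven]; ring) 1
  integral_mul_self := by
    calc ∫ x in (-1 : ℝ)..1, K x * x / κ₂ * x
      _ = ∫ x in (-1 : ℝ)..1, K x * x ^ 2 / κ₂ :=
        intervalIntegral.integral_congr fun x _ ↦ by ring
      _ = 1 := by rw [intervalIntegral.integral_div, ← hκ₂, div_self hκ₂_ne]
  integral_mul_sq := integral_eq_zero_of_odd (fun x ↦ by rw [heven]; ring) 1

namespace IsDerivativeKernel

variable {G m : ℝ → ℝ} {b t : ℝ}

lemma boundedVariationOn (hG : IsDerivativeKernel G) : BoundedVariationOn G univ :=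
  boundedVariationOn_univ_of_eq_const hG.locallyBoundedVariationOn hG.eq_zero_of_one_lt_abs

lemma abs_le_eVariationOn (hG : IsDerivativeKernel G) (x : ℝ) :
    |G x| ≤ (eVariationOn G univ).toReal := by
  have hG₂ : G 2 = 0 := hG.eq_zero_of_one_lt_abs 2 (by norm_num)
  simpa [Real.dist_eq, hG₂] using hG.boundedVariationOn.dist_le (mem_univ x) (mem_univ 2)

lemma integral_comp_sub_div_mul (hG : IsDerivativeKernel G) (hb : 0 < b)
    (ht : t ∈ Icc b (1 - b)) (f : ℝ → ℝ) :
    ∫ y in (0 : ℝ)..1, G ((y - t) / b) * f y = b * ∫ x in (-1 : ℝ)..1, G x * f (b * x + t) := by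
  have hsupp : ∀ y ∈ Icc (0 : ℝ) 1 \ Icc (b * -1 + t) (b * 1 + t),
      G ((y - t) / b) * f y = 0 := fun y hy ↦ by
    have hy : 1 < |(y - t) / b| := by
      rw [abs_div, abs_of_pos hb, one_lt_div hb, lt_abs]
      by_contra! h
      exact hy.2 ⟨by linarith, by linarith⟩
    rw [hG.eq_zero_of_one_lt_abs _ hy, zero_mul]
  rw [integral_eq_integral_of_eq_zero (by linarith [ht.1]) (by linarith) (by linarith [ht.2]) hsupp,
    ← intervalIntegral.smul_integral_comp_mul_add, smul_eq_mul]
  simp only [add_sub_cancel_right, mul_div_cancel_left₀ _ hb.ne']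

lemma integral_mul_sub_taylor (hG : IsDerivativeKernel G) {f : ℝ → ℝ}
    (hf : ContinuousOn f (uIcc (-1) 1)) (c₀ c₁ c₂ : ℝ) :
    ∫ x in (-1 : ℝ)..1, G x * (f x - (c₀ + c₁ * x + c₂ * x ^ 2))
      = (∫ x in (-1 : ℝ)..1, G x * f x) - c₁ := by
  have hint : IntervalIntegrable G volume (-1) 1 :=
    intervalIntegrable_of_boundedVariationOn (hG.boundedVariationOn.mono (subset_univ _))
  have h₀ : IntervalIntegrable (fun x ↦ c₀ * G x) volume (-1) 1 := hint.const_mul c₀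
  have h₁ : IntervalIntegrable (fun x ↦ c₁ * (G x * x)) volume (-1) 1 :=
    (hint.mul_continuousOn continuousOn_id).const_mul c₁
  have h₂ : IntervalIntegrable (fun x ↦ c₂ * (G x * x ^ 2)) volume (-1) 1 :=
    (hint.mul_continuousOn (continuousOn_pow 2)).const_mul c₂
  calc ∫ x in (-1 : ℝ)..1, G x * (f x - (c₀ + c₁ * x + c₂ * x ^ 2))
    _ = ∫ x in (-1 : ℝ)..1, (G x * f x - (c₀ * G x + c₁ * (G x * x) + c₂ * (G x * x ^ 2))) :=
      intervalIntegral.integral_congr fun x _ ↦ by ring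
    _ = (∫ x in (-1 : ℝ)..1, G x * f x) - c₁ := by
      rw [intervalIntegral.integral_sub (hint.mul_continuousOn hf) ((h₀.add h₁).add h₂),
        intervalIntegral.integral_add (h₀.add h₁) h₂, intervalIntegral.integral_add h₀ h₁]
      simp only [intervalIntegral.integral_const_mul, hG.integral_eq_zero, hG.integral_mul_self,
        hG.integral_mul_sq, mul_zero, mul_one, zero_add, add_zero]

lemma abs_integral_mul_le (hG : IsDerivativeKernel G) {r : ℝ → ℝ} {C : ℝ}
    (hr : ∀ x ∈ uIcc (-1) 1, |r x| ≤ C) :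
    |∫ x in (-1 : ℝ)..1, G x * r x| ≤ 2 * (eVariationOn G univ).toReal * C := by
  have hbound : ∀ x ∈ uIoc (-1) 1, ‖G x * r x‖ ≤ (eVariationOn G univ).toReal * C := fun x hx ↦ by
    rw [norm_mul]
    gcongr
    · exact hG.abs_le_eVariationOn x
    · exact hr x (uIoc_subset_uIcc hx)
  calc |∫ x in (-1 : ℝ)..1, G x * r x|
    _ ≤ (eVariationOn G univ).toReal * C * |1 - (-1)| :=
      intervalIntegral.norm_integral_le_of_norm_le_const hbound
    _ = 2 * (eVariationOn G univ).toReal * C := by norm_num; ring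

lemma abs_integral_sub_deriv_le (hG : IsDerivativeKernel G) {m' m'' : ℝ → ℝ} {L : ℝ≥0}
    (hm : ∀ x ∈ Icc (0 : ℝ) 1, HasDerivWithinAt m (m' x) (Icc 0 1) x)
    (hm' : ∀ x ∈ Icc (0 : ℝ) 1, HasDerivWithinAt m' (m'' x) (Icc 0 1) x)
    (hL : LipschitzOnWith L m'' (Icc 0 1)) (hb : 0 < b) (ht : t ∈ Icc b (1 - b)) :
    |1 / b ^ 2 * (∫ y in (0 : ℝ)..1, G ((y - t) / b) * m y) - m' t|
      ≤ 2 * (eVariationOn G univ).toReal * L * b ^ 2 := by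
  set V := (eVariationOn G univ).toReal
  have hmaps : ∀ x ∈ uIcc (-1 : ℝ) 1, b * x + t ∈ Icc (0 : ℝ) 1 := fun x hx ↦ by
    rw [uIcc_of_le (by norm_num)] at hx
    constructor <;> nlinarith [hx.1, hx.2, ht.1, ht.2]
  have ht₀ : t ∈ Icc (0 : ℝ) 1 := by simpa using hmaps 0 (by simp)
  have hcont : ContinuousOn (fun x ↦ m (b * x + t)) (uIcc (-1) 1) :=
    ContinuousOn.comp (fun x hx ↦ (hm x hx).continuousWithinAt) (by fun_prop) hmaps
  set T : ℝ → ℝ := fun x ↦ m t + b * m' t * x + b ^ 2 * m'' t / 2 * x ^ 2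
  have htaylor : ∀ x ∈ uIcc (-1 : ℝ) 1, |m (b * x + t) - T x| ≤ L * b ^ 3 := fun x hx ↦ by
    have hremainder := norm_sub_taylor_two_le_of_lipschitzOnWith (convex_Icc 0 1) hm hm' hL ht₀
      (hmaps x hx)
    rw [uIcc_of_le (by norm_num)] at hx
    calc |m (b * x + t) - T x| ≤ L * |b * x| ^ 3 := by
          convert hremainder using 2
          · simp only [T, smul_eq_mul, Real.norm_eq_abs]; ring_nf
          · rw [add_sub_cancel_right]
      _ ≤ L * b ^ 3 := by
          rw [abs_mul, abs_of_pos hb]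
          gcongr
          exact mul_le_of_le_one_right hb.le (abs_le.2 hx)
  have hdecomp : 1 / b ^ 2 * (∫ y in (0 : ℝ)..1, G ((y - t) / b) * m y) - m' t
      = 1 / b * ∫ x in (-1 : ℝ)..1, G x * (m (b * x + t) - T x) := by
    rw [hG.integral_comp_sub_div_mul hb ht, hG.integral_mul_sub_taylor hcont]
    field_simp
  rw [hdecomp, abs_mul, abs_of_pos (by positivity)]
  calc 1 / b * |∫ x in (-1 : ℝ)..1, G x * (m (b * x + t) - T x)|
    _ ≤ 1 / b * (2 * V * (L * b ^ 3)) := by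
      gcongr
      exact hG.abs_integral_mul_le htaylor
    _ = 2 * V * L * b ^ 2 := by field_simp

end IsDerivativeKernel

theorem local_linear_derivative_bias_bound_general {G m m' m'' : ℝ → ℝ} {L : ℝ≥0}
    (hG : IsDerivativeKernel G)
    (hm : ∀ x ∈ Icc (0 : ℝ) 1, HasDerivWithinAt m (m' x) (Icc 0 1) x)
    (hm' : ∀ x ∈ Icc (0 : ℝ) 1, HasDerivWithinAt m' (m'' x) (Icc 0 1) x)
    (hL : LipschitzOnWith L m'' (Icc 0 1)) :
    ∃ C > 0, ∀ n : ℕ, n ≠ 0 → ∀ b > 0, ∀ t ∈ Icc b (1 - b),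
      |1 / (n * b ^ 2) * ∑ i ∈ Finset.Icc 1 n, G ((i / n - t) / b) * m (i / n) - m' t|
        ≤ C * (1 / (n * b ^ 2) + b ^ 2) := by
  have hm_bv : BoundedVariationOn m (Icc 0 1) :=
    boundedVariationOn_Icc_of_hasDerivWithinAt hm fun x hx ↦ (hm' x hx).continuousWithinAt
  obtain ⟨C, hC, hsum⟩ := exists_abs_kernelSum_sub_integral_le hG.boundedVariationOn hm_bv
  set B := 2 * (eVariationOn G univ).toReal * L
  have hB : 0 ≤ B := by positivity
  refine ⟨C + B + 1, by positivity, fun n hn b hb t ht ↦ ?_⟩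
  set S := ∑ i ∈ Finset.Icc 1 n, G ((i / n - t) / b) * m (i / n)
  set I := ∫ y in (0 : ℝ)..1, G ((y - t) / b) * m y
  calc |1 / (n * b ^ 2) * S - m' t|
    _ = |1 / b ^ 2 * (1 / n * S - I) + (1 / b ^ 2 * I - m' t)| := by congr 1; field_simp; ring
    _ ≤ 1 / b ^ 2 * |1 / n * S - I| + |1 / b ^ 2 * I - m' t| := by
      refine (abs_add_le _ _).trans_eq ?_
      rw [abs_mul, abs_of_nonneg (by positivity : 0 ≤ 1 / b ^ 2)]
    _ ≤ 1 / b ^ 2 * (1 / n * C) + B * b ^ 2 := by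
      gcongr
      · exact hsum n hn b hb t
      · exact hG.abs_integral_sub_deriv_le hm hm' hL hb ht
    _ = C * (1 / (n * b ^ 2)) + B * b ^ 2 := by field_simp
    _ ≤ (C + B + 1) * (1 / (n * b ^ 2) + b ^ 2) := by
      have : 0 ≤ 1 / (n * b ^ 2) := by positivity
      nlinarith [sq_nonneg b]

/-- Deterministic (noise-free) part of Proposition 5.2(i): the local linear
estimator of the derivative, built from the equivalent derivative kernel
`K°(x) = K(x)·x / ∫ K(x)x² dx`, satisfies the uniform bias bound
`|(1/(nb²)) Σ_{i=1}^n K°((i/n - t)/b) m(i/n) - m'(t)| ≤ C (1/(nb²) + b²)`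
on `[b, 1-b]`. -/
theorem local_linear_derivative_bias_bound
    (m m' m'' K : ℝ → ℝ) (κ₂ : ℝ)
    (hm : ∀ x ∈ Icc (0:ℝ) 1, HasDerivWithinAt m (m' x) (Icc 0 1) x)
    (hm' : ∀ x ∈ Icc (0:ℝ) 1, HasDerivWithinAt m' (m'' x) (Icc 0 1) x)
    (hm''c : ContinuousOn m'' (Icc 0 1))
    (hm''lip : ∃ Lm : NNReal, LipschitzOnWith Lm m'' (Icc 0 1))
    (hKlip : ∃ L : NNReal, LipschitzWith L K)
    (hKeven : ∀ x : ℝ, K (-x) = K x)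
    (hKsupp : ∀ x : ℝ, 1 < |x| → K x = 0)
    (hκ₂ : κ₂ = ∫ x in (-1:ℝ)..1, K x * x^2) (hκ₂pos : 0 < κ₂) :
    ∃ C > (0:ℝ), ∀ n : ℕ, 1 ≤ n → ∀ b : ℝ, b ∈ Ioc (0:ℝ) (1/2) →
      1 ≤ (n:ℝ) * b → ∀ t ∈ Icc b (1 - b),
        |(1 / ((n:ℝ) * b^2)) *
            ∑ i ∈ Finset.Icc 1 n,
              (K (((i:ℝ)/(n:ℝ) - t) / b) * (((i:ℝ)/(n:ℝ) - t) / b) / κ₂)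
                * m ((i:ℝ)/(n:ℝ))
          - m' t|
          ≤ C * (1 / ((n:ℝ) * b^2) + b^2) := by
  obtain ⟨Lm, hLm⟩ := hm''lip
  obtain ⟨L, hL⟩ := hKlip
  obtain ⟨C, hC, bound⟩ := local_linear_derivative_bias_bound_general
    (isDerivativeKernel_of_even (hL.locallyBoundedVariationOn univ) hKeven hKsupp hκ₂ hκ₂pos.ne')
    hm hm' hLm
  exact ⟨C, hC, fun n hn b hb _ t ht ↦ bound n (Nat.one_le_iff_ne_zero.1 hn) b hb.1 t ht⟩
end
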